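/- Let $p$ be an odd prime and write $\sigma_1\sigma_2 = (1\,2\,\ldots\,p)(\bar1\,\ldots\,\bar p)(1^*\,2^*\,\ldots\,p^*)(\overline{1^*}\,\ldots\,\overline{p^*})$ in $C_2\wr S_{2p}$, where $x^* = x+p$. Then the number of conjugates of the involution $f_p = (1\ 1^*)\cdots(p\ p^*)(\bar1\ \overline{1^*})\cdots(\bar p\ \overline{p^*})$ in $C_2\wr S_{2p}$ that commute with $\sigma_1\sigma_2$ is exactly $2p$. -/

import Mathlib

/-!
STATEMENT 7: Let `p` be an odd prime and, in `C₂ ≀ S_{2p}`,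
`σ₁σ₂ = (1 2 … p)(1̄ … p̄)(1* 2* … p*)(1̄* … p̄*)` (where `x* = x + p`).  Then the
number of conjugates in `C₂ ≀ S_{2p}` of the involution
`f_p = (1 1*)⋯(p p*)(1̄ 1̄*)⋯(p̄ p̄*)` that commute with `σ₁σ₂` is exactly `2p`.

We realize `C₂ ≀ S_{2p}` on `(Fin 2 × Fin p) × Bool`: the point `((j,i),ε)` is the
`i`-th point of the `j`-th block (`j = 0` the plain block, `j = 1` the starred one),
barred iff `ε = true`; `C₂ ≀ S_{2p}` is the centraliser of the bar involution,
`σ₁σ₂` rotates each block, and `f_p` swaps the two blocks.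
-/

def barPerm (α : Type*) : Equiv.Perm (α × Bool) :=
  Function.Involutive.toPerm (fun x => (x.1, !x.2)) (by intro x; simp)

/-- `σ₁σ₂`, rotating each of the two blocks of size `p`. -/
def rotBlocks (p : ℕ) : Equiv.Perm ((Fin 2 × Fin p) × Bool) :=
  Equiv.prodCongr (Equiv.prodCongr (Equiv.refl (Fin 2)) (finRotate p)) (Equiv.refl Bool)

/-- The involution `f_p`, swapping the two blocks pointwise. -/
def fp (p : ℕ) : Equiv.Perm ((Fin 2 × Fin p) × Bool) :=
  Equiv.prodCongr (Equiv.prodCongr (Equiv.swap (0 : Fin 2) 1) (Equiv.refl (Fin p)))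
    (Equiv.refl Bool)

theorem rotBlocks_ap (p : ℕ) [NeZero p] (j : Fin 2) (i : Fin p) (e : Bool) :
    rotBlocks p ((j, i), e) = ((j, i + 1), e) := by
  simp [rotBlocks, finRotate_apply]

theorem barPerm_ap (α : Type*) (a : α) (e : Bool) :
    barPerm α (a, e) = (a, !e) := rfl

theorem fp_ap (p : ℕ) (j : Fin 2) (i : Fin p) (e : Bool) :
    fp p ((j, i), e) = ((1 - j, i), e) := by
  fin_cases j <;> simp [fp]

/-- block twist -/
def twist (p : ℕ) [NeZero p] (k : Fin p) (d : Bool) : Equiv.Perm ((Fin 2 × Fin p) × Bool) where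
  toFun x := if x.1.1 = 0 then x else ((1, x.1.2 - k), xor x.2 d)
  invFun x := if x.1.1 = 0 then x else ((1, x.1.2 + k), xor x.2 d)
  left_inv := by
    rintro ⟨⟨j, i⟩, e⟩
    fin_cases j <;> simp
  right_inv := by
    rintro ⟨⟨j, i⟩, e⟩
    fin_cases j <;> simp

theorem twist_conj (p : ℕ) [NeZero p] (k : Fin p) (d : Bool) (j : Fin 2) (i : Fin p) (e : Bool) :
    ((twist p k d)⁻¹ * fp p * twist p k d) ((j, i), e) =
      if j = 0 then ((1, i + k), xor e d) else ((0, i - k), xor e d) := by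
  rw [Equiv.Perm.mul_apply, Equiv.Perm.mul_apply, Equiv.Perm.inv_eq_iff_eq]
  fin_cases j <;> simp [fp_ap, twist]

theorem conj_mem (p : ℕ) [NeZero p] (k : Fin p) (d : Bool) :
    (∃ h ∈ Subgroup.centralizer {barPerm (Fin 2 × Fin p)},
      (twist p k d)⁻¹ * fp p * twist p k d = h⁻¹ * fp p * h) ∧
        Commute ((twist p k d)⁻¹ * fp p * twist p k d) (rotBlocks p) := by
  refine ⟨⟨twist p k d, ?_, rfl⟩, ?_⟩
  · rw [Subgroup.mem_centralizer_singleton_iff]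
    ext1 ⟨⟨j, i⟩, e⟩
    fin_cases j <;> simp [twist, barPerm_ap]
  · show _ * _ = _ * _
    ext1 ⟨⟨j, i⟩, e⟩
    rw [Equiv.Perm.mul_apply _ (rotBlocks p), Equiv.Perm.mul_apply (rotBlocks p), rotBlocks_ap, twist_conj, twist_conj]
    fin_cases j <;> simp [rotBlocks_ap] <;> abel

theorem fin_double (p : ℕ) [NeZero p] (hodd : Odd p) (k : Fin p) (h : k + k = 0) : k = 0 := by
  have h1 := congrArg Fin.val h
  rw [Fin.val_add] at h1
  simp only [Fin.val_zero] at h1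
  obtain ⟨m, hm⟩ := hodd
  have := k.isLt
  apply Fin.ext
  simp only [Fin.val_zero]
  obtain ⟨c, hc⟩ := Nat.dvd_of_mod_eq_zero h1
  have hc2 : c < 2 := by
    by_contra hcc
    have : p * 2 ≤ p * c := Nat.mul_le_mul_left _ (by omega)
    omega
  interval_cases c <;> omega

theorem classify (p : ℕ) [NeZero p] (hodd : Odd p) (g : Equiv.Perm ((Fin 2 × Fin p) × Bool))
    (hg : ∃ h ∈ Subgroup.centralizer {barPerm (Fin 2 × Fin p)}, g = h⁻¹ * fp p * h)
    (hc : Commute g (rotBlocks p)) :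
    ∃ k d, g = (twist p k d)⁻¹ * fp p * twist p k d := by
  obtain ⟨h, hh, hgh⟩ := hg
  rw [Subgroup.mem_centralizer_singleton_iff] at hh
  have hbar : ∀ x, h (x.1, !x.2) = ((h x).1, !(h x).2) := fun x =>
    DFunLike.congr_fun hh x
  have hhg : ∀ x, h (g x) = fp p (h x) := by
    intro x; rw [hgh]; simp
  have hff : ∀ x, fp p (fp p x) = x := by
    rintro ⟨⟨j, i⟩, e⟩; simp [fp_ap]
  have hgg : ∀ x, g (g x) = x := by
    intro x; apply h.injective; rw [hhg, hhg, hff]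
  have hgbar : ∀ x, g (x.1, !x.2) = ((g x).1, !(g x).2) := by
    intro x; apply h.injective; rw [hhg, hbar, hbar, hhg]; rfl
  have hne : ∀ x, (g x).1 ≠ x.1 := by
    intro x hx
    have h1 : (h (g x)).1 = (h x).1 := by
      by_cases h2 : (g x).2 = x.2
      · rw [Prod.ext hx h2]
      · have : g x = (x.1, !x.2) := Prod.ext hx (by
          revert h2; cases (g x).2 <;> cases x.2 <;> simp)
        rw [this, hbar]
    rw [hhg] at h1
    generalize h x = y at h1
    obtain ⟨⟨j, i⟩, e⟩ := y
    rw [fp_ap] at h1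
    have := congrArg Prod.fst h1
    revert this
    fin_cases j <;> simp
  have hgrot : ∀ j i e, g ((j, i + 1), e) =
      (((g ((j, i), e)).1.1, (g ((j, i), e)).1.2 + 1), (g ((j, i), e)).2) := by
    intro j i e
    have := DFunLike.congr_fun hc.eq ((j, i), e)
    rw [Equiv.Perm.mul_apply, Equiv.Perm.mul_apply, rotBlocks_ap] at this
    rw [this, ← rotBlocks_ap]
  obtain ⟨⟨⟨j, k⟩, d⟩, hz⟩ : ∃ z, g ((0, 0), false) = z := ⟨_, rfl⟩
  have hn : ∀ n : ℕ, ∀ i : Fin p, i.val = n → g ((0, i), false) = ((j, i + k), d) := by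
    intro n
    induction n with
    | zero =>
      intro i hi
      have : i = 0 := Fin.ext (by simpa using hi)
      subst this
      simpa using hz
    | succ n ih =>
      intro i hi
      have h1 : i = ⟨n, by omega⟩ + 1 := by
        apply Fin.ext
        rw [Fin.val_add_one_of_lt']
        · exact hi
        · simp; omega
      rw [h1, hgrot, ih _ rfl]
      simp only [Prod.mk.injEq, and_true, true_and]
      abel
  have h0 : ∀ i e, g ((0, i), e) = ((j, i + k), xor e d) := by
    intro i e
    cases e
    · simpa using hn _ i rfl
    · have := hgbar ((0, i), false)
      rw [hn _ i rfl] at this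
      simpa using this
  have hj : j = 1 := by
    by_contra hj
    have hj : j = 0 := by omega
    subst hj
    have h1 := hgg ((0, 0), false)
    rw [h0, h0] at h1
    have hk : k = 0 := fin_double p hodd k (by simpa using congrArg (fun x => x.1.2) h1)
    apply hne ((0, 0), false)
    rw [h0, hk]
    simp
  subst hj
  refine ⟨k, d, ?_⟩
  ext1 ⟨⟨j, i⟩, e⟩
  rw [twist_conj]
  by_cases hj : j = 0
  · subst hj; simp [h0]
  · have hj : j = 1 := by omega
    subst hj
    have := hgg ((0, i - k), xor e d)
    rw [h0] at this
    simpa using this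

/-- The number of conjugates of `f_p` in `C₂ ≀ S_{2p}` commuting with `σ₁σ₂` is `2p`. -/
theorem card_fixed_conjugates (p : ℕ) (hp : p.Prime) (hodd : Odd p) :
    Nat.card {g : Equiv.Perm ((Fin 2 × Fin p) × Bool) //
        (∃ h ∈ Subgroup.centralizer {barPerm (Fin 2 × Fin p)}, g = h⁻¹ * fp p * h) ∧
        Commute g (rotBlocks p)} = 2 * p := by
  haveI : NeZero p := ⟨hp.ne_zero⟩
  let F : Fin p × Bool → {g : Equiv.Perm ((Fin 2 × Fin p) × Bool) //
        (∃ h ∈ Subgroup.centralizer {barPerm (Fin 2 × Fin p)}, g = h⁻¹ * fp p * h) ∧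
        Commute g (rotBlocks p)} :=
    fun x => ⟨(twist p x.1 x.2)⁻¹ * fp p * twist p x.1 x.2, conj_mem p x.1 x.2⟩
  have hF : Function.Bijective F := by
    constructor
    · rintro ⟨k, d⟩ ⟨k', d'⟩ hx
      have h1 := DFunLike.congr_fun (congrArg Subtype.val hx) ((0, 0), false)
      simp only [F] at h1
      rw [twist_conj, twist_conj] at h1
      simpa using h1
    · rintro ⟨g, hg, hc⟩
      obtain ⟨k, d, h⟩ := classify p hodd g hg hc
      exact ⟨(k, d), Subtype.ext h.symm⟩
  rw [← Nat.card_congr (Equiv.ofBijective F hF)]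
  simp [mul_comm]
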